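/- arXiv:2509.05988 — 4 statements merged into one kernel-verified Lean document; each statement's English description precedes it below -/
import Mathlib

section
/- (Davis–Kahan sin Θ bound, variant of Yu–Wang–Samworth.) Let Σ, Σ̂ ∈ ℝ^{p×p} be symmetric matrices with eigenvalues λ_1 ≥ … ≥ λ_p and λ̂_1 ≥ … ≥ λ̂_p respectively. Fix 1 ≤ r ≤ s ≤ p, set λ_0 := +∞ and λ_{p+1} := −∞, and assume min(λ_{r−1} − λ_r, λ_s − λ_{s+1}) > 0. Let m := s − r + 1. Let v_r, …, v_s be orthonormal vectors with Σ v_j = λ_j v_j, and let v̂_1, …, v̂_p be an orthonormal eigenbasis of Σ̂ with Σ̂ v̂_j = λ̂_j v̂_j. Let V = (v_r, …, v_s) ∈ ℝ^{p×m} and let V̂_1 = (v̂_1, …, v̂_{r−1}, v̂_{s+1}, …, v̂_p) ∈ ℝ^{p×(p−m)}. Then ‖V̂_1ᵀ V‖ ≤ 2 · min( m^{1/2} ‖Σ̂ − Σ‖_op , ‖Σ̂ − Σ‖ ) / min(λ_{r−1} − λ_r, λ_s − λ_{s+1}), where ‖·‖ is the Frobenius norm and ‖·‖_op the operator (spectral)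 norm. -/
open Matrix

/-- Frobenius norm of a real matrix. -/
noncomputable def frobNormR {p q : ℕ} (M : Matrix (Fin p) (Fin q) ℝ) : ℝ :=
  Real.sqrt (∑ i, ∑ j, (M i j) ^ 2)

/-- Operator (spectral) norm of a real matrix, as the norm of the induced
linear map between Euclidean spaces. -/
noncomputable def opNormR {p : ℕ} (M : Matrix (Fin p) (Fin p) ℝ) : ℝ :=
  ‖LinearMap.toContinuousLinearMap (Matrix.toEuclideanLin M)‖

theorem dk_dot_eq {p : ℕ} (x : Fin p → ℝ) : x ⬝ᵥ x = ‖WithLp.toLp 2 x‖ ^ 2 := by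
  rw [EuclideanSpace.real_norm_sq_eq]
  simp [dotProduct, sq]

theorem dk_self_nonneg {p : ℕ} (x : Fin p → ℝ) : 0 ≤ x ⬝ᵥ x := by
  rw [dk_dot_eq]; positivity

theorem dk_parseval {p : ℕ} (u : ℕ → Fin p → ℝ)
    (hu : ∀ i ∈ Finset.Icc 1 p, ∀ j ∈ Finset.Icc 1 p,
      u i ⬝ᵥ u j = if i = j then (1 : ℝ) else 0) (x y : Fin p → ℝ) :
    ∑ j ∈ Finset.Icc 1 p, (u j ⬝ᵥ x) * (u j ⬝ᵥ y) = x ⬝ᵥ y := by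
  let U : Matrix (Fin p) (Fin p) ℝ := Matrix.of fun i => u (i + 1)
  have h1 : U * Uᵀ = 1 := by
    ext i j
    have hi := i.2
    have hj := j.2
    have := hu (i + 1) (Finset.mem_Icc.mpr ⟨by omega, by omega⟩) (j + 1)
      (Finset.mem_Icc.mpr ⟨by omega, by omega⟩)
    simp only [Matrix.mul_apply', Matrix.one_apply, Fin.ext_iff]
    simp only [add_left_inj] at this
    exact this
  have h2 : Uᵀ * U = 1 := mul_eq_one_comm.mp h1
  have h3 : (U *ᵥ x) ⬝ᵥ (U *ᵥ y) = x ⬝ᵥ y := by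
    rw [Matrix.dotProduct_mulVec, ← Matrix.mulVec_transpose, Matrix.mulVec_mulVec, h2,
      Matrix.one_mulVec]
  rw [← h3]
  have h4 : (U *ᵥ x) ⬝ᵥ (U *ᵥ y) = ∑ i : Fin p, (u (i + 1) ⬝ᵥ x) * (u (i + 1) ⬝ᵥ y) := rfl
  rw [h4, Fin.sum_univ_eq_sum_range (fun i => (u (i + 1) ⬝ᵥ x) * (u (i + 1) ⬝ᵥ y)) p,
    Finset.range_eq_Ico, Finset.sum_Ico_add' (fun i => (u i ⬝ᵥ x) * (u i ⬝ᵥ y)) 0 p 1]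
  rfl

theorem dk_symm {p : ℕ} {A : Matrix (Fin p) (Fin p) ℝ} (hA : A.IsSymm) {a : Fin p → ℝ} {l : ℝ}
    (h : A *ᵥ a = l • a) (x : Fin p → ℝ) : a ⬝ᵥ (A *ᵥ x) = l * (a ⬝ᵥ x) := by
  rw [Matrix.dotProduct_mulVec, ← Matrix.mulVec_transpose, hA.eq, h, smul_dotProduct, smul_eq_mul]

theorem dk_weyl {p : ℕ} (A B : Matrix (Fin p) (Fin p) ℝ) (hA : A.IsSymm) (hB : B.IsSymm)
    (a b : ℕ → ℝ) (w z : ℕ → Fin p → ℝ)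
    (ha : ∀ i j, 1 ≤ i → i ≤ j → j ≤ p → a j ≤ a i)
    (hb : ∀ i j, 1 ≤ i → i ≤ j → j ≤ p → b j ≤ b i)
    (hw : ∀ i ∈ Finset.Icc 1 p, ∀ j ∈ Finset.Icc 1 p,
      w i ⬝ᵥ w j = if i = j then (1 : ℝ) else 0)
    (hwe : ∀ j ∈ Finset.Icc 1 p, A *ᵥ w j = a j • w j)
    (hz : ∀ i ∈ Finset.Icc 1 p, ∀ j ∈ Finset.Icc 1 p,
      z i ⬝ᵥ z j = if i = j then (1 : ℝ) else 0)
    (hze : ∀ j ∈ Finset.Icc 1 p, B *ᵥ z j = b j • z j)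
    (e : ℝ) (he : ∀ x : Fin p → ℝ, x ⬝ᵥ ((B - A) *ᵥ x) ≤ e * (x ⬝ᵥ x))
    (k : ℕ) (hk : k ∈ Finset.Icc 1 p) : b k ≤ a k + e := by
  have hk' := Finset.mem_Icc.mp hk
  let M : Matrix ((Finset.Icc 1 p).erase k) (Fin p) ℝ :=
    Matrix.of fun j => if j.1 < k then w j else z j
  have hker : LinearMap.ker M.mulVecLin ≠ ⊥ := by
    apply LinearMap.ker_ne_bot_of_finrank_lt
    rw [Module.finrank_fintype_fun_eq_card, Module.finrank_fintype_fun_eq_card,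
      Fintype.card_coe, Finset.card_erase_of_mem hk]
    simp
    omega
  obtain ⟨x, hx, hx0⟩ := (Submodule.ne_bot_iff _).mp hker
  have hMx : M *ᵥ x = 0 := by simpa using hx
  have hwx : ∀ j ∈ Finset.Icc 1 p, j < k → w j ⬝ᵥ x = 0 := by
    intro j hj hjk
    have := congrFun hMx ⟨j, Finset.mem_erase.mpr ⟨by omega, hj⟩⟩
    simpa [M, Matrix.mulVec, hjk] using this
  have hzx : ∀ j ∈ Finset.Icc 1 p, k < j → z j ⬝ᵥ x = 0 := by
    intro j hj hjk
    have := congrFun hMx ⟨j, Finset.mem_erase.mpr ⟨by omega, hj⟩⟩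
    simpa [M, Matrix.mulVec, not_lt.mpr hjk.le] using this
  have hpos : 0 < x ⬝ᵥ x := by
    rcases (dk_self_nonneg x).lt_or_eq with h | h
    · exact h
    · exact absurd (dotProduct_self_eq_zero.mp h.symm) hx0
  have h1 : x ⬝ᵥ (A *ᵥ x) ≤ a k * (x ⬝ᵥ x) := by
    rw [← dk_parseval w hw x (A *ᵥ x), ← dk_parseval w hw x x, Finset.mul_sum]
    apply Finset.sum_le_sum
    intro j hj
    have hj' := Finset.mem_Icc.mp hj
    rw [dk_symm hA (hwe j hj)]
    by_cases hjk : j < k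
    · simp [hwx j hj hjk]
    · have := ha k j hk'.1 (by omega) hj'.2
      nlinarith [mul_self_nonneg (w j ⬝ᵥ x)]
  have h2 : b k * (x ⬝ᵥ x) ≤ x ⬝ᵥ (B *ᵥ x) := by
    rw [← dk_parseval z hz x (B *ᵥ x), ← dk_parseval z hz x x, Finset.mul_sum]
    apply Finset.sum_le_sum
    intro j hj
    have hj' := Finset.mem_Icc.mp hj
    rw [dk_symm hB (hze j hj)]
    by_cases hjk : k < j
    · simp [hzx j hj hjk]
    · have := hb j k hj'.1 (by omega) hk'.2
      nlinarith [mul_self_nonneg (z j ⬝ᵥ x)]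
  have h3 := he x
  rw [Matrix.sub_mulVec, dotProduct_sub] at h3
  by_contra hcon
  push Not at hcon
  nlinarith

theorem dk_op {p : ℕ} (E : Matrix (Fin p) (Fin p) ℝ) (x : Fin p → ℝ) :
    (E *ᵥ x) ⬝ᵥ (E *ᵥ x) ≤ opNormR E ^ 2 * (x ⬝ᵥ x) := by
  rw [dk_dot_eq, dk_dot_eq, ← mul_pow]
  have := (LinearMap.toContinuousLinearMap (Matrix.toEuclideanLin E)).le_opNorm (WithLp.toLp 2 x)
  exact pow_le_pow_left₀ (norm_nonneg _) this 2

theorem dk_op_nonneg {p : ℕ} (E : Matrix (Fin p) (Fin p) ℝ) : 0 ≤ opNormR E := norm_nonneg _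

theorem dk_cs {p : ℕ} (x y : Fin p → ℝ) : (x ⬝ᵥ y) ^ 2 ≤ (x ⬝ᵥ x) * (y ⬝ᵥ y) := by
  have := Finset.sum_mul_sq_le_sq_mul_sq Finset.univ x y
  simpa [dotProduct, sq] using this

theorem dk_op_quad {p : ℕ} (E : Matrix (Fin p) (Fin p) ℝ) (x : Fin p → ℝ) :
    |x ⬝ᵥ (E *ᵥ x)| ≤ opNormR E * (x ⬝ᵥ x) := by
  apply abs_le_of_sq_le_sq _ (mul_nonneg (dk_op_nonneg E) (dk_self_nonneg x))
  calc _ ≤ _ := dk_cs _ _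
    _ ≤ (x ⬝ᵥ x) * (opNormR E ^ 2 * (x ⬝ᵥ x)) :=
      mul_le_mul_of_nonneg_left (dk_op E x) (dk_self_nonneg x)
    _ = _ := by ring

/-- mass of `S × (T \ S)` equals mass of `(T \ S) × S` for a doubly stochastic array. -/
theorem dk_swap (T S : Finset ℕ) (hS : S ⊆ T) (W : ℕ → ℕ → ℝ)
    (hrow : ∀ j ∈ T, ∑ k ∈ T, W j k = 1) (hcol : ∀ k ∈ T, ∑ j ∈ T, W j k = 1) :
    ∑ k ∈ T \ S, ∑ j ∈ S, W j k = ∑ k ∈ S, ∑ j ∈ T \ S, W j k := by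
  have h1 : ∑ k ∈ T, ∑ j ∈ S, W j k = S.card := by
    rw [Finset.sum_comm, Finset.sum_congr rfl fun j hj => hrow j (hS hj)]; simp
  have h2 : ∑ k ∈ S, ∑ j ∈ T, W j k = S.card := by
    rw [Finset.sum_congr rfl fun j hj => hcol j (hS hj)]; simp
  rw [← Finset.sum_sdiff hS] at h1
  rw [Finset.sum_congr rfl fun k _ => (Finset.sum_sdiff (f := fun j => W j k) hS).symm,
    Finset.sum_add_distrib] at h2
  linarith

theorem dk_claim (T L I : Finset ℕ) (hL : L ⊆ T) (hI : I ⊆ T \ L) (W : ℕ → ℕ → ℝ)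
    (hW : ∀ j k, 0 ≤ W j k)
    (hrow : ∀ j ∈ T, ∑ k ∈ T, W j k = 1) (hcol : ∀ k ∈ T, ∑ j ∈ T, W j k = 1)
    (d : ℕ → ℕ → ℝ) (δ : ℝ)
    (h : (∀ j ∈ L, ∀ k ∈ I, δ ^ 2 ≤ 4 * d j k ^ 2) ∨
      (∀ j ∈ T \ L, ∀ k ∈ L, δ ^ 2 ≤ 4 * d j k ^ 2)) :
    δ ^ 2 * ∑ k ∈ I, ∑ j ∈ L, W j k ≤
      4 * (∑ k ∈ I, ∑ j ∈ L, d j k ^ 2 * W j k) +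
      4 * (∑ k ∈ L, ∑ j ∈ T \ L, d j k ^ 2 * W j k) := by
  have hnn : ∀ j k, 0 ≤ d j k ^ 2 * W j k := fun j k => mul_nonneg (sq_nonneg _) (hW j k)
  have n1 : 0 ≤ ∑ k ∈ I, ∑ j ∈ L, d j k ^ 2 * W j k :=
    Finset.sum_nonneg fun k _ => Finset.sum_nonneg fun j _ => hnn j k
  have n2 : 0 ≤ ∑ k ∈ L, ∑ j ∈ T \ L, d j k ^ 2 * W j k :=
    Finset.sum_nonneg fun k _ => Finset.sum_nonneg fun j _ => hnn j k
  have key : ∀ J K : Finset ℕ, (∀ j ∈ J, ∀ k ∈ K, δ ^ 2 ≤ 4 * d j k ^ 2) →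
      δ ^ 2 * ∑ k ∈ K, ∑ j ∈ J, W j k ≤ 4 * ∑ k ∈ K, ∑ j ∈ J, d j k ^ 2 * W j k := by
    intro J K hJK
    simp only [Finset.mul_sum]
    refine Finset.sum_le_sum fun k hk => Finset.sum_le_sum fun j hj => ?_
    rw [← mul_assoc]
    exact mul_le_mul_of_nonneg_right (hJK j hj k hk) (hW j k)
  rcases h with h | h
  · have := key L I h
    linarith
  · have := key (T \ L) L h
    have h2 : ∑ k ∈ I, ∑ j ∈ L, W j k ≤ ∑ k ∈ T \ L, ∑ j ∈ L, W j k :=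
      Finset.sum_le_sum_of_subset_of_nonneg hI
        fun k _ _ => Finset.sum_nonneg fun j _ => hW j k
    rw [dk_swap T L hL W hrow hcol] at h2
    have := mul_le_mul_of_nonneg_left h2 (sq_nonneg δ)
    linarith

/-- **Davis–Kahan `sin Θ` bound (Yu–Wang–Samworth variant), Proposition 2 of the paper.**
`Σ, Σ̂` are symmetric `p × p` real matrices; `lam 1 ≥ … ≥ lam p` are the eigenvalues of `Σ`
(realized by the orthonormal eigenbasis `u 1, …, u p`), and `lamhat 1 ≥ … ≥ lamhat p` those
of `Σ̂` (realized by the orthonormal eigenbasis `vhat 1, …, vhat p`).  For `1 ≤ r ≤ s ≤ p`,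
`v r, …, v s` are orthonormal eigenvectors of `Σ` with `Σ v j = lam j • v j`.  The gap
`δ = min (lam (r-1) - lam r) (lam s - lam (s+1))` (with the conventions `lam 0 = ∞`,
`lam (p+1) = -∞`, encoded by the hypotheses `hgapL`, `hgapR`) is assumed positive.  Then
`‖V̂₁ᵀ V‖ ≤ 2 min(√m ‖Σ̂-Σ‖_op, ‖Σ̂-Σ‖) / δ`, where `m = s - r + 1` and
`‖V̂₁ᵀ V‖² = ∑_{j ∈ [1,p] \ [r,s]} ∑_{k ∈ [r,s]} (vhat j ⬝ᵥ v k)²`. -/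
theorem stmt3 (p : ℕ) (hp : 1 ≤ p)
    (Sig Sighat : Matrix (Fin p) (Fin p) ℝ)
    (hSig : Sig.IsSymm) (hSighat : Sighat.IsSymm)
    (lam lamhat : ℕ → ℝ)
    (u v vhat : ℕ → Fin p → ℝ)
    (hlam_anti : ∀ i j, 1 ≤ i → i ≤ j → j ≤ p → lam j ≤ lam i)
    (hlamhat_anti : ∀ i j, 1 ≤ i → i ≤ j → j ≤ p → lamhat j ≤ lamhat i)
    (hu_orth : ∀ i ∈ Finset.Icc 1 p, ∀ j ∈ Finset.Icc 1 p,
      u i ⬝ᵥ u j = if i = j then (1 : ℝ) else 0)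
    (hu_eig : ∀ j ∈ Finset.Icc 1 p, Sig *ᵥ u j = lam j • u j)
    (hvhat_orth : ∀ i ∈ Finset.Icc 1 p, ∀ j ∈ Finset.Icc 1 p,
      vhat i ⬝ᵥ vhat j = if i = j then (1 : ℝ) else 0)
    (hvhat_eig : ∀ j ∈ Finset.Icc 1 p, Sighat *ᵥ vhat j = lamhat j • vhat j)
    (r s : ℕ) (hr : 1 ≤ r) (hrs : r ≤ s) (hsp : s ≤ p)
    (hv_orth : ∀ i ∈ Finset.Icc r s, ∀ j ∈ Finset.Icc r s,
      v i ⬝ᵥ v j = if i = j then (1 : ℝ) else 0)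
    (hv_eig : ∀ j ∈ Finset.Icc r s, Sig *ᵥ v j = lam j • v j)
    (δ : ℝ) (hδ : 0 < δ)
    (hgapL : 2 ≤ r → δ ≤ lam (r - 1) - lam r)
    (hgapR : s < p → δ ≤ lam s - lam (s + 1)) :
    Real.sqrt (∑ j ∈ Finset.Icc 1 p \ Finset.Icc r s, ∑ k ∈ Finset.Icc r s,
        (vhat j ⬝ᵥ v k) ^ 2)
      ≤ 2 * min (Real.sqrt ((s - r + 1 : ℕ) : ℝ) * opNormR (Sighat - Sig))
          (frobNormR (Sighat - Sig)) / δ := by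
  set T := Finset.Icc 1 p with hT
  set I := Finset.Icc r s with hIdef
  have hIT : I ⊆ T := Finset.Icc_subset_Icc hr hsp
  -- gap facts
  have hgL : ∀ j ∈ T, j < r → lam r + δ ≤ lam j := by
    intro j hj hjr
    have hj' := Finset.mem_Icc.mp hj
    have h1 := hgapL (by omega)
    have h2 := hlam_anti j (r - 1) hj'.1 (by omega) (by omega)
    linarith
  have hgR : ∀ j ∈ T, s < j → lam j ≤ lam s - δ := by
    intro j hj hjr
    have hj' := Finset.mem_Icc.mp hj
    have h1 := hgapR (by omega)
    have h2 := hlam_anti (s + 1) j (by omega) (by omega) hj'.2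
    linarith
  have hin : ∀ k ∈ I, lam s ≤ lam k ∧ lam k ≤ lam r := by
    intro k hk
    have hk' := Finset.mem_Icc.mp hk
    exact ⟨hlam_anti k s (by omega) hk'.2 hsp, hlam_anti r k hr hk'.1 (by omega)⟩
  have hgap : ∀ j ∈ T \ I, ∀ k ∈ I, δ ^ 2 ≤ (lam k - lam j) ^ 2 := by
    intro j hj k hk
    obtain ⟨hjT, hjI⟩ := Finset.mem_sdiff.mp hj
    have hki := hin k hk
    by_cases hjr : j < r
    · have := hgL j hjT hjr
      nlinarith
    · have : s < j := by
        by_contra hc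
        exact hjI (Finset.mem_Icc.mpr ⟨by omega, by omega⟩)
      have := hgR j hjT this
      nlinarith
  -- the completed eigenbasis
  have huv : ∀ j ∈ T \ I, ∀ k ∈ I, u j ⬝ᵥ v k = 0 := by
    intro j hj k hk
    have h1 := dk_symm hSig (hu_eig j (Finset.mem_sdiff.mp hj).1) (v k)
    rw [hv_eig k hk, dotProduct_smul, smul_eq_mul] at h1
    have h2 := hgap j hj k hk
    have h3 : (lam k - lam j) * (u j ⬝ᵥ v k) = 0 := by linarith
    rcases mul_eq_zero.mp h3 with h | h
    · rw [h] at h2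
      nlinarith
    · exact h
  let w : ℕ → Fin p → ℝ := fun j => if j ∈ I then v j else u j
  have hw_eig : ∀ j ∈ T, Sig *ᵥ w j = lam j • w j := by
    intro j hj
    by_cases hjI : j ∈ I
    · simpa [w, hjI] using hv_eig j hjI
    · simpa [w, hjI] using hu_eig j hj
  have hw_orth : ∀ i ∈ T, ∀ j ∈ T, w i ⬝ᵥ w j = if i = j then (1 : ℝ) else 0 := by
    intro i hi j hj
    by_cases hiI : i ∈ I <;> by_cases hjI : j ∈ I
    · simpa [w, hiI, hjI] using hv_orth i hiI j hjI
    · have hne : i ≠ j := fun h => hjI (h ▸ hiI)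
      simp only [w, hiI, hjI, if_true, if_false, hne]
      rw [dotProduct_comm]
      exact huv j (Finset.mem_sdiff.mpr ⟨hj, hjI⟩) i hiI
    · have hne : i ≠ j := fun h => hiI (h ▸ hjI)
      simp only [w, hiI, hjI, if_true, if_false, hne]
      exact huv i (Finset.mem_sdiff.mpr ⟨hi, hiI⟩) j hjI
    · simpa [w, hiI, hjI] using hu_orth i hi j hj
  let W : ℕ → ℕ → ℝ := fun j k => (w j ⬝ᵥ vhat k) ^ 2
  have hW : ∀ j k, 0 ≤ W j k := fun j k => sq_nonneg _
  have hrow : ∀ j ∈ T, ∑ k ∈ T, W j k = 1 := by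
    intro j hj
    have h1 := dk_parseval vhat hvhat_orth (w j) (w j)
    rw [hw_orth j hj j hj, if_pos rfl] at h1
    rw [← h1]
    refine Finset.sum_congr rfl fun k _ => ?_
    simp only [W]
    rw [dotProduct_comm, sq]
  have hcol : ∀ k ∈ T, ∑ j ∈ T, W j k = 1 := by
    intro k hk
    have h1 := dk_parseval w hw_orth (vhat k) (vhat k)
    rw [hvhat_orth k hk k hk, if_pos rfl] at h1
    rw [← h1]
    refine Finset.sum_congr rfl fun k _ => ?_
    simp only [W]
    rw [sq]
  have hLHS : ∑ j ∈ T \ I, ∑ k ∈ I, (vhat j ⬝ᵥ v k) ^ 2 = ∑ k ∈ I, ∑ j ∈ T \ I, W j k := by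
    rw [← dk_swap T I hIT W hrow hcol]
    refine Finset.sum_congr rfl fun j _ => Finset.sum_congr rfl fun k hk => ?_
    simp only [W, w, hk, if_true]
    rw [dotProduct_comm]
  rw [hLHS]
  set X := ∑ k ∈ I, ∑ j ∈ T \ I, W j k with hX
  set E := Sighat - Sig with hE
  have hop0 := dk_op_nonneg E
  -- operator norm part
  have hweyl : ∀ k ∈ T, (lam k - lamhat k) ^ 2 ≤ opNormR E ^ 2 := by
    intro k hk
    have h1 := dk_weyl Sig Sighat hSig hSighat lam lamhat w vhat hlam_anti hlamhat_anti
      hw_orth hw_eig hvhat_orth hvhat_eig (opNormR E)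
      (fun x => (abs_le.mp (dk_op_quad E x)).2) k hk
    have h2 := dk_weyl Sighat Sig hSighat hSig lamhat lam vhat w hlamhat_anti hlam_anti
      hvhat_orth hvhat_eig hw_orth hw_eig (opNormR E)
      (fun x => by
        have := (abs_le.mp (dk_op_quad E x)).1
        rw [← neg_sub Sighat Sig, Matrix.neg_mulVec, dotProduct_neg]
        linarith) k hk
    apply sq_le_sq'
    · linarith
    · linarith
  have hop : δ ^ 2 * X ≤ 4 * (((s - r + 1 : ℕ) : ℝ) * opNormR E ^ 2) := by
    have hper : ∀ k ∈ I, δ ^ 2 * ∑ j ∈ T \ I, W j k ≤ 4 * opNormR E ^ 2 := by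
      intro k hk
      have hkT := hIT hk
      have hvv : vhat k ⬝ᵥ vhat k = 1 := by rw [hvhat_orth k hkT k hkT, if_pos rfl]
      have hEv : E *ᵥ vhat k = lamhat k • vhat k - Sig *ᵥ vhat k := by
        rw [hE, Matrix.sub_mulVec, hvhat_eig k hkT]
      have hEb := dk_op E (vhat k)
      rw [hvv, mul_one, ← dk_parseval w hw_orth] at hEb
      have hterm : ∀ j ∈ T, (lam k - lam j) ^ 2 * W j k ≤
          2 * ((lam k - lamhat k) ^ 2 * W j k) +
          2 * ((w j ⬝ᵥ (E *ᵥ vhat k)) * (w j ⬝ᵥ (E *ᵥ vhat k))) := by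
        intro j hj
        rw [hEv, dotProduct_sub, dotProduct_smul, dk_symm hSig (hw_eig j hj), smul_eq_mul]
        simp only [W]
        nlinarith [sq_nonneg ((lam k - lamhat k) * (w j ⬝ᵥ vhat k) -
          (lamhat k * (w j ⬝ᵥ vhat k) - lam j * (w j ⬝ᵥ vhat k)))]
      calc δ ^ 2 * ∑ j ∈ T \ I, W j k
          ≤ ∑ j ∈ T \ I, (lam k - lam j) ^ 2 * W j k := by
            rw [Finset.mul_sum]
            exact Finset.sum_le_sum fun j hj =>
              mul_le_mul_of_nonneg_right (hgap j hj k hk) (hW j k)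
        _ ≤ ∑ j ∈ T, (lam k - lam j) ^ 2 * W j k :=
            Finset.sum_le_sum_of_subset_of_nonneg Finset.sdiff_subset
              fun j _ _ => mul_nonneg (sq_nonneg _) (hW j k)
        _ ≤ ∑ j ∈ T, (2 * ((lam k - lamhat k) ^ 2 * W j k) +
          2 * ((w j ⬝ᵥ (E *ᵥ vhat k)) * (w j ⬝ᵥ (E *ᵥ vhat k)))) := Finset.sum_le_sum hterm
        _ = 2 * (lam k - lamhat k) ^ 2 +
          2 * ∑ j ∈ T, ((w j ⬝ᵥ (E *ᵥ vhat k)) * (w j ⬝ᵥ (E *ᵥ vhat k))) := by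
            rw [Finset.sum_add_distrib, ← Finset.mul_sum, ← Finset.mul_sum, ← Finset.mul_sum,
              hcol k hkT, mul_one]
        _ ≤ 4 * opNormR E ^ 2 := by
            have := hweyl k hkT
            linarith
    rw [hX, Finset.mul_sum]
    refine (Finset.sum_le_sum hper).trans ?_
    rw [Finset.sum_const, hIdef, Nat.card_Icc, nsmul_eq_mul, show s + 1 - r = s - r + 1 by omega]
    exact le_of_eq (by ring)
  -- Frobenius part
  let d : ℕ → ℕ → ℝ := fun j k => lamhat k - lam j
  have hfrobE : ∑ a : Fin p, ∑ b : Fin p, (E a b) ^ 2 = ∑ k ∈ T, ∑ j ∈ T, d j k ^ 2 * W j k := by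
    have h1 : ∀ k ∈ T, ∑ j ∈ T, d j k ^ 2 * W j k = (E *ᵥ vhat k) ⬝ᵥ (E *ᵥ vhat k) := by
      intro k hk
      rw [← dk_parseval w hw_orth]
      refine Finset.sum_congr rfl fun j hj => ?_
      rw [hE, Matrix.sub_mulVec, hvhat_eig k hk, dotProduct_sub, dotProduct_smul,
        dk_symm hSig (hw_eig j hj), smul_eq_mul]
      simp only [W, d]
      ring
    rw [Finset.sum_congr rfl h1]
    have h2 : ∀ k, (E *ᵥ vhat k) ⬝ᵥ (E *ᵥ vhat k) = ∑ a, (vhat k ⬝ᵥ E a) * (vhat k ⬝ᵥ E a) := by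
      intro k
      simp only [dotProduct_comm (vhat k)]
      rfl
    simp only [h2]
    rw [Finset.sum_comm (s := T) (t := Finset.univ)]
    refine Finset.sum_congr rfl fun a _ => ?_
    rw [dk_parseval vhat hvhat_orth]
    simp [dotProduct, sq]
  have hfr : δ ^ 2 * X ≤ 4 * ∑ a : Fin p, ∑ b : Fin p, (E a b) ^ 2 := by
    rw [hfrobE]
    let L := Finset.Ico 1 r
    let R := Finset.Ioc s p
    have hLT : L ⊆ T := by
      intro j hj
      simp only [L, T, Finset.mem_Ico, Finset.mem_Icc] at hj ⊢
      omega
    have hRT : R ⊆ T := by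
      intro j hj
      simp only [R, T, Finset.mem_Ioc, Finset.mem_Icc] at hj ⊢
      omega
    have hIL : I ⊆ T \ L := by
      intro j hj
      simp only [I, L, T, Finset.mem_sdiff, Finset.mem_Ico, Finset.mem_Icc] at hj ⊢
      omega
    have hIR : I ⊆ T \ R := by
      intro j hj
      simp only [I, R, T, Finset.mem_sdiff, Finset.mem_Ioc, Finset.mem_Icc] at hj ⊢
      omega
    have hLR : Disjoint L R := by
      rw [Finset.disjoint_left]
      intro j hj
      simp only [L, R, Finset.mem_Ioc, Finset.mem_Ico] at hj ⊢
      omega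
    have hTI : T \ I = L ∪ R := by
      ext j
      simp only [I, L, R, T, Finset.mem_sdiff, Finset.mem_union, Finset.mem_Ioc, Finset.mem_Ico,
        Finset.mem_Icc]
      omega
    have c1 := dk_claim T L I hLT hIL W hW hrow hcol d δ (by
      by_cases hc : lamhat r ≤ lam r + δ / 2
      · left
        intro j hj k hk
        have hj' := Finset.mem_Ico.mp hj
        have hk' := Finset.mem_Icc.mp hk
        have h1 := hgL j (hLT hj) hj'.2
        have h2 := hlamhat_anti r k hr hk'.1 (by omega)
        simp only [d]
        nlinarith
      · right
        intro j hj k hk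
        have hk' := Finset.mem_Ico.mp hk
        obtain ⟨hjT, hjL⟩ := Finset.mem_sdiff.mp hj
        have hj' := Finset.mem_Icc.mp hjT
        have hrj : r ≤ j := by
          by_contra hcc
          exact hjL (Finset.mem_Ico.mpr ⟨hj'.1, by omega⟩)
        have h1 := hlam_anti r j hr hrj hj'.2
        have h2 := hlamhat_anti k r hk'.1 (by omega) (by omega)
        simp only [d]
        nlinarith)
    have c2 := dk_claim T R I hRT hIR W hW hrow hcol d δ (by
      by_cases hc : lam s - δ / 2 ≤ lamhat s
      · left
        intro j hj k hk
        have hj' := Finset.mem_Ioc.mp hj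
        have hk' := Finset.mem_Icc.mp hk
        have h1 := hgR j (hRT hj) hj'.1
        have h2 := hlamhat_anti k s (by omega) hk'.2 (by omega)
        simp only [d]
        nlinarith
      · right
        intro j hj k hk
        have hk' := Finset.mem_Ioc.mp hk
        obtain ⟨hjT, hjL⟩ := Finset.mem_sdiff.mp hj
        have hj' := Finset.mem_Icc.mp hjT
        have hrj : j ≤ s := by
          by_contra hcc
          exact hjL (Finset.mem_Ioc.mpr ⟨by omega, hj'.2⟩)
        have h1 := hlam_anti j s hj'.1 hrj hsp
        have h2 := hlamhat_anti s k (by omega) (by omega) hk'.2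
        simp only [d]
        nlinarith)
    have hX2 : X = ∑ k ∈ I, ∑ j ∈ L, W j k + ∑ k ∈ I, ∑ j ∈ R, W j k := by
      rw [hX, hTI, ← Finset.sum_add_distrib]
      exact Finset.sum_congr rfl fun k _ => Finset.sum_union hLR
    have hnn : ∀ j k, 0 ≤ d j k ^ 2 * W j k := fun j k => mul_nonneg (sq_nonneg _) (hW j k)
    have hsub : ∀ S K : Finset ℕ, S ⊆ T → ∑ k ∈ K, ∑ j ∈ S, d j k ^ 2 * W j k ≤
        ∑ k ∈ K, ∑ j ∈ T, d j k ^ 2 * W j k := fun S K hS =>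
      Finset.sum_le_sum fun k _ => Finset.sum_le_sum_of_subset_of_nonneg hS fun j _ _ => hnn j k
    have e1 := hsub (T \ L) L Finset.sdiff_subset
    have e2 := hsub (T \ R) R Finset.sdiff_subset
    have e3 := hsub (T \ I) I Finset.sdiff_subset
    have e3' : ∑ k ∈ I, ∑ j ∈ T \ I, d j k ^ 2 * W j k =
        ∑ k ∈ I, ∑ j ∈ L, d j k ^ 2 * W j k + ∑ k ∈ I, ∑ j ∈ R, d j k ^ 2 * W j k := by
      rw [hTI, ← Finset.sum_add_distrib]
      exact Finset.sum_congr rfl fun k _ => Finset.sum_union hLR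
    have e4 : ∑ k ∈ T, ∑ j ∈ T, d j k ^ 2 * W j k =
        (∑ k ∈ L, ∑ j ∈ T, d j k ^ 2 * W j k + ∑ k ∈ R, ∑ j ∈ T, d j k ^ 2 * W j k) +
          ∑ k ∈ I, ∑ j ∈ T, d j k ^ 2 * W j k := by
      rw [← Finset.sum_union hLR, ← hTI, Finset.sum_sdiff hIT]
    rw [hX2, e4]
    linarith
  -- conclusion
  have hX0 : 0 ≤ X := Finset.sum_nonneg fun k _ => Finset.sum_nonneg fun j _ => hW j k
  have hfin : ∀ y : ℝ, 0 ≤ y → δ ^ 2 * X ≤ 4 * y ^ 2 → δ * Real.sqrt X ≤ 2 * y := by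
    intro y hy hle
    refine (sq_le_sq₀ (by positivity) (by positivity)).mp ?_
    rw [mul_pow, Real.sq_sqrt hX0]
    linarith
  rw [le_div_iff₀ hδ, mul_comm, mul_min_of_nonneg _ _ (by norm_num : (0 : ℝ) ≤ 2)]
  apply le_min
  · apply hfin _ (mul_nonneg (Real.sqrt_nonneg _) hop0)
    rw [mul_pow, Real.sq_sqrt (Nat.cast_nonneg _)]
    exact hop
  · apply hfin (frobNormR E) (Real.sqrt_nonneg _)
    have hsq : frobNormR E ^ 2 = ∑ a : Fin p, ∑ b : Fin p, (E a b) ^ 2 :=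
      Real.sq_sqrt (Finset.sum_nonneg fun a _ => Finset.sum_nonneg fun b _ => sq_nonneg (E a b))
    rw [hsq]
    exact hfr
end

section
/- Let d ≥ 1 and let S, Ŝ ∈ ℂ^{d×d} be positive semidefinite Hermitian matrices with Tr(S) > 0 and Tr(Ŝ) > 0. Define F₁(Ŝ, S) = (Tr √(√Ŝ S √Ŝ))² / (Tr(Ŝ) Tr(S)) − (Tr(S − Ŝ))² / d². Then F₁(Ŝ, S) = 1 if and only if Ŝ = S. -/
open Matrix ComplexOrder

/-- The positive semidefinite square root of a matrix (junk value `0` if the matrix is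
not positive semidefinite). -/
noncomputable def matSqrt {n : Type*} [Fintype n] [DecidableEq n]
    (M : Matrix n n ℂ) : Matrix n n ℂ :=
  open scoped Classical MatrixOrder in
  if h : M.PosSemidef then CFC.sqrt M else 0

theorem polar_aux (d : ℕ) (X P : Matrix (Fin d) (Fin d) ℂ) (h : Xᴴ * X = Pᴴ * P) :
    ∃ U : Matrix (Fin d) (Fin d) ℂ, Uᴴ * U = 1 ∧ U * P = X := by
  have hstar : ∀ M : Matrix (Fin d) (Fin d) ℂ, ∀ x, ‖toEuclideanLin M x‖ ^ 2
      = (star x.ofLp ⬝ᵥ ((Mᴴ * M) *ᵥ x.ofLp)).re := by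
    intro M x
    rw [← inner_self_eq_norm_sq (𝕜 := ℂ), EuclideanSpace.inner_eq_star_dotProduct]
    simp only [toLpLin_apply, ← mulVec_mulVec, star_mulVec]
    rw [dotProduct_comm, dotProduct_mulVec, dotProduct_mulVec, dotProduct_mulVec]
    simp [star_mulVec, vecMul_vecMul]
  let f := toEuclideanLin X
  let p := toEuclideanLin P
  have hn : ∀ x, ‖f x‖ = ‖p x‖ := by
    intro x
    have : ‖f x‖ ^ 2 = ‖p x‖ ^ 2 := by
      simp only [f, p, hstar, h]
    exact (sq_eq_sq₀ (norm_nonneg _) (norm_nonneg _)).1 this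
  obtain ⟨g, hg⟩ := p.rangeRestrict.exists_rightInverse_of_surjective p.range_rangeRestrict
  have hg' : ∀ y : p.range, p (g y) = y := by
    intro y
    have := congrArg Subtype.val (LinearMap.congr_fun hg y)
    simpa using this
  let L : p.range →ₗᵢ[ℂ] EuclideanSpace ℂ (Fin d) :=
    ⟨f ∘ₗ g, by
      intro y
      simp only [LinearMap.comp_apply]
      rw [hn, hg']; rfl⟩
  let T := L.extend
  have hT : ∀ x, T (p x) = f x := by
    intro x
    have h1 : T (p x) = f (g ⟨p x, LinearMap.mem_range_self _ _⟩) :=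
      L.extend_apply ⟨p x, LinearMap.mem_range_self _ _⟩
    rw [h1, ← sub_eq_zero, ← map_sub, ← norm_eq_zero, hn, map_sub, hg']
    simp
  let U := toEuclideanLin.symm T.toLinearMap
  have hU : toEuclideanLin U = T.toLinearMap := LinearEquiv.apply_symm_apply _ _
  refine ⟨U, ?_, ?_⟩
  · apply toEuclideanLin.injective
    refine LinearMap.ext fun x => ext_inner_left ℂ fun y => ?_
    have e : toEuclideanLin (Uᴴ * U) = toEuclideanLin Uᴴ ∘ₗ toEuclideanLin U := by
      ext; simp [toLpLin_apply]
    rw [e, toEuclideanLin_conjTranspose_eq_adjoint, LinearMap.comp_apply,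
      LinearMap.adjoint_inner_right, hU]
    simp
  · apply toEuclideanLin.injective
    refine LinearMap.ext fun x => ?_
    have e : toEuclideanLin (U * P) = toEuclideanLin U ∘ₗ toEuclideanLin P := by
      ext; simp [toLpLin_apply]
    rw [e, LinearMap.comp_apply, hU]
    exact hT x

open scoped MatrixOrder in
theorem matSqrt_spec {d : ℕ} {M : Matrix (Fin d) (Fin d) ℂ} (h : M.PosSemidef) :
    (matSqrt M).PosSemidef ∧ matSqrt M * matSqrt M = M := by
  have e : matSqrt M = CFC.sqrt M := by simp [matSqrt, h]
  rw [e]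
  exact ⟨Matrix.nonneg_iff_posSemidef.1 (CFC.sqrt_nonneg M),
    CFC.sqrt_mul_sqrt_self M (Matrix.nonneg_iff_posSemidef.2 h)⟩

open scoped MatrixOrder in
theorem matSqrt_mul_self {d : ℕ} {M : Matrix (Fin d) (Fin d) ℂ} (h : M.PosSemidef) :
    matSqrt (M * M) = M := by
  have h2 : (M * M).PosSemidef := by
    have := posSemidef_conjTranspose_mul_self M
    rwa [h.isHermitian.eq] at this
  have e : matSqrt (M * M) = CFC.sqrt (M * M) := by simp [matSqrt, h2]
  rw [e]
  exact CFC.sqrt_mul_self M (Matrix.nonneg_iff_posSemidef.2 h)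

/-- For positive semidefinite Hermitian `d × d` matrices `S, Ŝ` with positive traces, the
corrected fidelity `F₁(Ŝ, S) = (Tr √(√Ŝ S √Ŝ))² / (Tr(Ŝ) Tr(S)) − (Tr(S − Ŝ))² / d²`
equals `1` if and only if `Ŝ = S`. -/
theorem stmt4 (d : ℕ) (hd : 1 ≤ d) (S Shat : Matrix (Fin d) (Fin d) ℂ)
    (hS : S.PosSemidef) (hShat : Shat.PosSemidef)
    (htS : 0 < S.trace.re) (htShat : 0 < Shat.trace.re) :
    ((matSqrt (matSqrt Shat * S * matSqrt Shat)).trace.re) ^ 2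
        / (Shat.trace.re * S.trace.re)
      - ((S - Shat).trace.re) ^ 2 / (d : ℝ) ^ 2 = 1
    ↔ Shat = S := by
  have hd0 : (0 : ℝ) < d := by exact_mod_cast hd
  obtain ⟨hA, hAA⟩ := matSqrt_spec hShat
  constructor
  · intro hF
    obtain ⟨hB, hBB⟩ := matSqrt_spec hS
    set A := matSqrt Shat
    set B := matSqrt S
    have hM : (A * S * A).PosSemidef := by
      have := hS.conjTranspose_mul_mul_same A
      rwa [hA.isHermitian.eq] at this
    obtain ⟨hP, hPP⟩ := matSqrt_spec hM
    set P := matSqrt (A * S * A)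
    obtain ⟨U, hU, hUP⟩ := polar_aux d (B * A) P (by
      rw [conjTranspose_mul, hA.isHermitian.eq, hB.isHermitian.eq, hP.isHermitian.eq, hPP, ← hBB]
      noncomm_ring)
    have hU' : U * Uᴴ = 1 := mul_eq_one_comm.1 hU
    set a := Shat.trace.re
    set s := S.trace.re
    set t := P.trace.re
    let c : ℝ := t / s
    have hts : a * s ≤ t ^ 2 := by
      have h1 : 0 ≤ ((S - Shat).trace.re) ^ 2 / (d : ℝ) ^ 2 := by positivity
      have h2 : 1 ≤ t ^ 2 / (a * s) := by linarith
      rwa [le_div_iff₀ (by positivity), one_mul] at h2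
    let Y := A - (c : ℂ) • (B * U)
    have hYY : Yᴴ * Y = Shat - (c : ℂ) • (P)ᴴ - (c : ℂ) • P + ((c : ℂ) ^ 2) • (Uᴴ * S * U) := by
      have e1 : Uᴴ * B * A = P := by rw [mul_assoc, ← hUP, ← mul_assoc, hU, one_mul]
      have e2 : A * (B * U) = Pᴴ := by
        rw [← e1]; simp [conjTranspose_mul, hA.isHermitian.eq, hB.isHermitian.eq]
      have e3 : Uᴴ * B * (B * U) = Uᴴ * S * U := by rw [← hBB]; noncomm_ring
      simp only [Y, conjTranspose_sub, conjTranspose_smul, conjTranspose_mul,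
        hA.isHermitian.eq, hB.isHermitian.eq, sub_mul, mul_sub, smul_mul_assoc, mul_smul_comm,
        e1, e2, e3, hAA, smul_sub, smul_smul]
      simp only [RCLike.star_def, Complex.conj_ofReal, ← pow_two]
      abel
    have htr : (Uᴴ * S * U).trace = S.trace := by
      rw [trace_mul_comm, ← mul_assoc, hU', one_mul]
    have hYre : (Yᴴ * Y).trace.re = a - 2 * c * t + c ^ 2 * s := by
      rw [hYY, hP.isHermitian.eq]
      simp only [trace_add, trace_sub, trace_smul, htr, Complex.add_re, Complex.sub_re,
        smul_eq_mul, ← Complex.ofReal_pow, Complex.re_ofReal_mul]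
      ring
    have hYnn := (posSemidef_conjTranspose_mul_self Y).trace_nonneg
    rw [Complex.le_def] at hYnn
    have hval : a - 2 * c * t + c ^ 2 * s = (a * s - t ^ 2) / s := by
      simp only [c]; field_simp; ring
    have hle : (a * s - t ^ 2) / s ≤ 0 := div_nonpos_of_nonpos_of_nonneg (by linarith) htS.le
    have hY0 : (Yᴴ * Y).trace = 0 := by
      apply Complex.ext
      · have := hYnn.1
        simp only [Complex.zero_re] at this ⊢
        linarith
      · exact hYnn.2.symm
    rw [trace_conjTranspose_mul_self_eq_zero_iff] at hY0
    have hAe : A = (c : ℂ) • (B * U) := sub_eq_zero.1 hY0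
    have hSh : Shat = ((c ^ 2 : ℝ) : ℂ) • S := by
      have : A * Aᴴ = ((c ^ 2 : ℝ) : ℂ) • S := by
        rw [hAe, conjTranspose_smul, conjTranspose_mul, hB.isHermitian.eq, smul_mul_assoc,
          mul_smul_comm, smul_smul, mul_assoc, ← mul_assoc U, hU', one_mul, hBB]
        simp [pow_two]
      rw [← this, hA.isHermitian.eq, hAA]
    have ha : a = c ^ 2 * s := by
      have := congrArg (fun M => (trace M).re) hSh
      simpa only [trace_smul, smul_eq_mul, Complex.re_ofReal_mul] using this
    have ht : t ^ 2 = a * s := by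
      rw [ha]; simp only [c]; field_simp
    have h0 : (S - Shat).trace.re ^ 2 / (d : ℝ) ^ 2 = 0 := by
      rw [ht, div_self (by positivity)] at hF
      linarith
    have h1 : s - a = 0 := by
      have h2 : (S - Shat).trace.re ^ 2 = 0 := by
        rcases div_eq_zero_iff.1 h0 with h | h
        · exact h
        · exact absurd h (by positivity)
      have h3 := pow_eq_zero_iff (two_ne_zero) |>.1 h2
      simpa [trace_sub] using h3
    have hc : c ^ 2 = 1 := by
      have : (c ^ 2 - 1) * s = 0 := by linarith
      rcases mul_eq_zero.1 this with h | h
      · linarith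
      · linarith
    rw [hSh, hc]; simp
  · rintro rfl
    have e : matSqrt Shat * Shat * matSqrt Shat = Shat * Shat := by
      generalize matSqrt Shat = A at hAA
      subst hAA
      noncomm_ring
    rw [e, matSqrt_mul_self hShat, sub_self]
    simp
    field_simp
end

section
/- Let d ≥ 2 and let λ̃_1 ≥ λ̃_2 ≥ … ≥ λ̃_d be real numbers. Let k with 1 ≤ k ≤ d − 1 satisfy λ̃_{k+1} + (∑_{i=k+2}^{d} λ̃_i)/(k+1) < 0. Then ∑_{j=k+1}^{d} λ̃_j ≤ 0. -/
/-- Key combinatorial claim of the fast physical-projection (eigenvalue truncation)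
algorithm: if `λ̃_1 ≥ … ≥ λ̃_d` and `1 ≤ k ≤ d − 1` satisfies
`λ̃_{k+1} + (∑_{i=k+2}^{d} λ̃_i)/(k+1) < 0`, then `∑_{j=k+1}^{d} λ̃_j ≤ 0`. -/
theorem stmt9 (d : ℕ) (hd : 2 ≤ d) (lam : ℕ → ℝ)
    (hmono : ∀ i j, 1 ≤ i → i ≤ j → j ≤ d → lam j ≤ lam i)
    (k : ℕ) (hk1 : 1 ≤ k) (hk2 : k ≤ d - 1)
    (hneg : lam (k + 1) + (∑ i ∈ Finset.Icc (k + 2) d, lam i) / (k + 1) < 0) :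
    ∑ j ∈ Finset.Icc (k + 1) d, lam j ≤ 0 := by
  rcases le_total (lam (k + 1)) 0 with h | h
  · apply Finset.sum_nonpos
    intro j hj
    rw [Finset.mem_Icc] at hj
    exact (hmono (k + 1) j (by omega) hj.1 hj.2).trans h
  · have hkd : k + 1 ≤ d := by omega
    have hsplit : ∑ j ∈ Finset.Icc (k + 1) d, lam j
        = lam (k + 1) + ∑ i ∈ Finset.Icc (k + 2) d, lam i := by
      have hset : Finset.Icc (k + 1) d = insert (k + 1) (Finset.Icc (k + 2) d) := by
        ext x
        simp only [Finset.mem_Icc, Finset.mem_insert]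
        omega
      rw [hset, Finset.sum_insert (by simp)]
    rw [hsplit]
    have hpos : (0 : ℝ) < (k : ℝ) + 1 := by positivity
    have h2 : (∑ i ∈ Finset.Icc (k + 2) d, lam i) / ((k : ℝ) + 1) < -lam (k + 1) := by linarith
    rw [div_lt_iff₀ hpos] at h2
    have h3 : 0 ≤ (k : ℝ) * lam (k + 1) := by positivity
    nlinarith
end

section
/- Let d ≥ 1, let P̃ ∈ ℂ^{d×d} be a positive semidefinite Hermitian matrix with eigenvalues λ̃_1 ≥ … ≥ λ̃_d ≥ 0, let c > 0, and let S ∈ ℂ^{d×d} be any matrix with Frobenius norm ‖S‖ ≤ c. Let λ̂_1 ≥ … ≥ λ̂_d ≥ 0 be the eigenvalues of P̂ = S P̃ S†. Then for every r with 0 ≤ r ≤ d, ∑_{j=r+1}^{d} λ̂_j ≤ c² · ∑_{j=r+1}^{d} λ̃_j. -/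
open Matrix ComplexOrder

/-- Frobenius norm of a complex matrix. -/
noncomputable def frobNorm {m n : Type*} [Fintype m] [Fintype n]
    (M : Matrix m n ℂ) : ℝ :=
  Real.sqrt (∑ i, ∑ j, ‖M i j‖ ^ 2)

lemma aux_nsq {d : ℕ} (x : Fin d → ℂ) : star x ⬝ᵥ x = ((∑ i, ‖x i‖ ^ 2 : ℝ) : ℂ) := by
  simp only [dotProduct, Pi.star_apply, Complex.ofReal_sum]
  refine Finset.sum_congr rfl fun i _ => ?_
  rw [Complex.star_def, Complex.conj_mul']
  push_cast
  rfl

lemma aux_diag {d : ℕ} (l : Fin d → ℝ) (x : Fin d → ℂ) :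
    star x ⬝ᵥ (Matrix.diagonal (fun i => (l i : ℂ)) *ᵥ x)
      = ((∑ i, l i * ‖x i‖ ^ 2 : ℝ) : ℂ) := by
  simp only [dotProduct, Pi.star_apply, Complex.ofReal_sum, Matrix.mulVec_diagonal]
  refine Finset.sum_congr rfl fun i _ => ?_
  have h := Complex.conj_mul' (x i)
  rw [Complex.star_def]
  push_cast
  rw [← h]
  ring

lemma aux_sandwich {d : ℕ} (A D : Matrix (Fin d) (Fin d) ℂ) (x : Fin d → ℂ) :
    star x ⬝ᵥ ((Aᴴ * D * A) *ᵥ x) = star (A *ᵥ x) ⬝ᵥ (D *ᵥ (A *ᵥ x)) := by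
  rw [Matrix.star_mulVec, ← Matrix.dotProduct_mulVec, Matrix.mulVec_mulVec, Matrix.mulVec_mulVec]

lemma aux_isom {d : ℕ} (A : Matrix (Fin d) (Fin d) ℂ) (hA : Aᴴ * A = 1) (x : Fin d → ℂ) :
    ∑ i, ‖(A *ᵥ x) i‖ ^ 2 = ∑ i, ‖x i‖ ^ 2 := by
  have h := aux_sandwich A 1 x
  rw [Matrix.mul_one, hA, Matrix.one_mulVec, Matrix.one_mulVec, aux_nsq, aux_nsq] at h
  exact (Complex.ofReal_injective h).symm

lemma aux_frob {d : ℕ} (S : Matrix (Fin d) (Fin d) ℂ) (x : Fin d → ℂ) :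
    ∑ i, ‖(Sᴴ *ᵥ x) i‖ ^ 2 ≤ (∑ i, ∑ j, ‖S i j‖ ^ 2) * ∑ i, ‖x i‖ ^ 2 := by
  rw [Finset.sum_comm, Finset.sum_mul]
  refine Finset.sum_le_sum fun i _ => ?_
  have h1 : ‖(Sᴴ *ᵥ x) i‖ ≤ ∑ j, ‖S j i‖ * ‖x j‖ := by
    simp only [Matrix.mulVec, dotProduct]
    refine (norm_sum_le _ _).trans (le_of_eq ?_)
    refine Finset.sum_congr rfl fun j _ => ?_
    simp
  exact (pow_le_pow_left₀ (norm_nonneg _) h1 2).trans (Finset.sum_mul_sq_le_sq_mul_sq _ _ _)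

lemma aux_core {d : ℕ} (P : Matrix (Fin d) (Fin d) ℂ) (l : Fin d → ℝ) (u : Fin d → Fin d → ℂ)
    (ho : ∀ i j, star (u i) ⬝ᵥ u j = if i = j then (1 : ℂ) else 0)
    (he : ∀ j, P *ᵥ u j = (l j : ℂ) • u j) :
    ∃ U : Matrix (Fin d) (Fin d) ℂ, Uᴴ * U = 1 ∧ U * Uᴴ = 1 ∧
      P = U * Matrix.diagonal (fun i => (l i : ℂ)) * Uᴴ := by
  have h1 : ((Matrix.of u)ᵀ)ᴴ * (Matrix.of u)ᵀ = 1 := by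
    ext i j
    rw [Matrix.one_apply, ← ho i j]
    simp [Matrix.mul_apply, dotProduct]
  have h2 := mul_eq_one_comm.mp h1
  refine ⟨(Matrix.of u)ᵀ, h1, h2, ?_⟩
  have h3 : P * (Matrix.of u)ᵀ = (Matrix.of u)ᵀ * Matrix.diagonal (fun i => (l i : ℂ)) := by
    ext i j
    have := congrFun (he j) i
    rw [Matrix.mul_diagonal]
    simp only [Matrix.mulVec, dotProduct, Pi.smul_apply, smul_eq_mul] at this
    simp only [Matrix.mul_apply, Matrix.transpose_apply, Matrix.of_apply]
    rw [this, mul_comm]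
  rw [← h3, Matrix.mul_assoc, h2, Matrix.mul_one]

lemma aux_main {d : ℕ} (P S : Matrix (Fin d) (Fin d) ℂ) (l m : Fin d → ℝ)
    (u w : Fin d → Fin d → ℂ)
    (c : ℝ) (hc : 0 < c) (hS : frobNorm S ≤ c)
    (hl : Antitone l) (hl0 : ∀ i, 0 ≤ l i) (hm : Antitone m)
    (huo : ∀ i j, star (u i) ⬝ᵥ u j = if i = j then (1 : ℂ) else 0)
    (hue : ∀ j, P *ᵥ u j = (l j : ℂ) • u j)
    (hwo : ∀ i j, star (w i) ⬝ᵥ w j = if i = j then (1 : ℂ) else 0)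
    (hwe : ∀ j, (S * P * Sᴴ) *ᵥ w j = (m j : ℂ) • w j) (k : Fin d) :
    m k ≤ c ^ 2 * l k := by
  obtain ⟨U, hU1, hU2, hP⟩ := aux_core P l u huo hue
  obtain ⟨W, hW1, hW2, hQ⟩ := aux_core _ m w hwo hwe
  set M : Matrix (Fin d) (Fin d) ℂ := Uᴴ * Sᴴ * W with hM
  have hE : Matrix.diagonal (fun i => (m i : ℂ))
      = Mᴴ * Matrix.diagonal (fun i => (l i : ℂ)) * M := by
    have e1 : Matrix.diagonal (fun i => (m i : ℂ)) = Wᴴ * (S * P * Sᴴ) * W := by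
      rw [hQ]
      calc _ = (Wᴴ * W) * Matrix.diagonal (fun i => (m i : ℂ)) * (Wᴴ * W) := by simp [hW1]
        _ = _ := by simp only [Matrix.mul_assoc]
    rw [e1, hP, hM]
    simp only [Matrix.conjTranspose_mul, Matrix.conjTranspose_conjTranspose, Matrix.mul_assoc]
  have hfrob : (∑ i, ∑ j, ‖S i j‖ ^ 2) ≤ c ^ 2 := (Real.sqrt_le_left hc.le).mp hS
  have hbd : ∀ a, ∑ i, ‖(M *ᵥ a) i‖ ^ 2 ≤ c ^ 2 * ∑ i, ‖a i‖ ^ 2 := by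
    intro a
    have e : M *ᵥ a = Uᴴ *ᵥ (Sᴴ *ᵥ (W *ᵥ a)) := by
      simp only [hM, Matrix.mulVec_mulVec, Matrix.mul_assoc]
    rw [e, aux_isom Uᴴ (by simpa using hU2), ← aux_isom W hW1 a]
    exact (aux_frob S _).trans (by gcongr)
  obtain ⟨a, ha0, ha⟩ : ∃ a : Fin d → ℂ, a ≠ 0 ∧
      (Matrix.of fun i j => if i < k then M i j else if k < i then
        (1 : Matrix (Fin d) (Fin d) ℂ) i j else 0) *ᵥ a = 0 := by
    rw [Matrix.exists_mulVec_eq_zero_iff]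
    exact Matrix.det_eq_zero_of_row_eq_zero k (by simp)
  have hlow : ∀ i, i < k → (M *ᵥ a) i = 0 := by
    intro i hi
    have := congrFun ha i
    simpa [Matrix.mulVec, dotProduct, hi] using this
  have hhigh : ∀ i, k < i → a i = 0 := by
    intro i hi
    have := congrFun ha i
    simpa [Matrix.mulVec, dotProduct, hi, hi.not_gt, Matrix.one_apply] using this
  have hquad : ∑ i, m i * ‖a i‖ ^ 2 = ∑ i, l i * ‖(M *ᵥ a) i‖ ^ 2 := by
    apply Complex.ofReal_injective
    rw [← aux_diag, ← aux_diag, hE, aux_sandwich]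
  have hpos : 0 < ∑ i, ‖a i‖ ^ 2 := by
    obtain ⟨i, hi⟩ := Function.ne_iff.mp ha0
    exact Finset.sum_pos' (fun i _ => by positivity)
      ⟨i, Finset.mem_univ i, by have := norm_pos_iff.mpr hi; positivity⟩
  have h1 : m k * ∑ i, ‖a i‖ ^ 2 ≤ ∑ i, m i * ‖a i‖ ^ 2 := by
    rw [Finset.mul_sum]
    refine Finset.sum_le_sum fun i _ => ?_
    rcases le_or_gt i k with h | h
    · exact mul_le_mul_of_nonneg_right (hm h) (by positivity)
    · simp [hhigh i h]
  have h2 : ∑ i, l i * ‖(M *ᵥ a) i‖ ^ 2 ≤ l k * ∑ i, ‖(M *ᵥ a) i‖ ^ 2 := by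
    rw [Finset.mul_sum]
    refine Finset.sum_le_sum fun i _ => ?_
    rcases le_or_gt k i with h | h
    · exact mul_le_mul_of_nonneg_right (hl h) (by positivity)
    · simp [hlow i h]
  have h3 := mul_le_mul_of_nonneg_left (hbd a) (hl0 k)
  refine le_of_mul_le_mul_right ?_ hpos
  linarith

/-- Deterministic core of Lemma 2 of the paper's Supplementary Material: if `P̃ ≥ 0` has
eigenvalues `λ̃_1 ≥ … ≥ λ̃_d ≥ 0`, `‖S‖ ≤ c` (Frobenius norm), and `P̂ = S P̃ S†` has
eigenvalues `λ̂_1 ≥ … ≥ λ̂_d ≥ 0`, then for every `0 ≤ r ≤ d`,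
`∑_{j=r+1}^{d} λ̂_j ≤ c² ∑_{j=r+1}^{d} λ̃_j`. -/
theorem stmt10 (d : ℕ) (hd : 1 ≤ d) (Ptil Phat S : Matrix (Fin d) (Fin d) ℂ)
    (hPtil : Ptil.PosSemidef)
    (c : ℝ) (hc : 0 < c) (hSnorm : frobNorm S ≤ c)
    (hPhat : Phat = S * Ptil * Sᴴ)
    (lamt lamh : ℕ → ℝ) (u w : ℕ → Fin d → ℂ)
    (hlamt_anti : ∀ i j, 1 ≤ i → i ≤ j → j ≤ d → lamt j ≤ lamt i)
    (hlamt_nonneg : ∀ j, 1 ≤ j → j ≤ d → 0 ≤ lamt j)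
    (hlamh_anti : ∀ i j, 1 ≤ i → i ≤ j → j ≤ d → lamh j ≤ lamh i)
    (hlamh_nonneg : ∀ j, 1 ≤ j → j ≤ d → 0 ≤ lamh j)
    (hu_orth : ∀ i ∈ Finset.Icc 1 d, ∀ j ∈ Finset.Icc 1 d,
      star (u i) ⬝ᵥ u j = if i = j then (1 : ℂ) else 0)
    (hu_eig : ∀ j ∈ Finset.Icc 1 d, Ptil *ᵥ u j = (lamt j : ℂ) • u j)
    (hw_orth : ∀ i ∈ Finset.Icc 1 d, ∀ j ∈ Finset.Icc 1 d,
      star (w i) ⬝ᵥ w j = if i = j then (1 : ℂ) else 0)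
    (hw_eig : ∀ j ∈ Finset.Icc 1 d, Phat *ᵥ w j = (lamh j : ℂ) • w j)
    (r : ℕ) (hr : r ≤ d) :
    ∑ j ∈ Finset.Icc (r + 1) d, lamh j ≤ c ^ 2 * ∑ j ∈ Finset.Icc (r + 1) d, lamt j := by
  subst hPhat
  rw [Finset.mul_sum]
  refine Finset.sum_le_sum fun j hj => ?_
  rw [Finset.mem_Icc] at hj
  have key := aux_main Ptil S (fun i : Fin d => lamt (i + 1)) (fun i : Fin d => lamh (i + 1))
    (fun i => u (i + 1)) (fun i => w (i + 1)) c hc hSnorm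
    (fun i j hij => hlamt_anti _ _ (by omega) (by have : (i : ℕ) ≤ j := hij
                                                  omega) (by omega))
    (fun i => hlamt_nonneg _ (by omega) (by omega))
    (fun i j hij => hlamh_anti _ _ (by omega) (by have : (i : ℕ) ≤ j := hij
                                                  omega) (by omega))
    (fun i j => by
      rw [hu_orth _ (by simp) _ (by simp)]
      simp [Fin.ext_iff])
    (fun j => hu_eig _ (by simp))
    (fun i j => by
      rw [hw_orth _ (by simp) _ (by simp)]
      simp [Fin.ext_iff])
    (fun j => hw_eig _ (by simp))
    ⟨j - 1, by omega⟩
  have e : j - 1 + 1 = j := by omega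
  simpa only [e] using key
end
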